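/- Let D = (0,1)^d and let K : D̄ × D̄ → ℝ be measurable with K(x,·) ∈ L²(D) for every x, with Λ := sup_{x∈D̄} ‖K(x,·)‖_{L²(D)} < ∞, and such that ⟨∫_D K(·,y) φ(y) dy, φ⟩_{L²(D)} ≥ a ‖∫_D K(·,y) φ(y) dy‖²_{L²(D)} for every φ ∈ L²(D), for some constant a > 0. Let F : ℝ → ℝ be continuous and bounded with (x − y)(F(x) − F(y)) ≥ −L|x − y|² for all x, y ∈ ℝ and some 0 ≤ L < a, and let g ∈ L²(D). Suppose u, u_n ∈ 𝒞₀(D̄) and η, η_n ∈ 𝒞₀(D̄) satisfy u(x) + ∫_D K(x,y)F(u(y))dy = ∫_D K(x,y)g(y)dy + η(x) and u_n(x) + ∫_D K(x,y)F(u_n(y))dy = ∫_D K(x,y)g(y)dy + η_n(x) for all x ∈ D̄. If η_n → η uniformly on D̄, then u_n → u uniformly on D̄. In other words, the solution map Ψ : η ↦ u is continuous on 𝒞₀(D̄) with respect to the uniform norm. -/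

import Mathlib

open MeasureTheory

noncomputable section

/-- The open unit cube `D = (0,1)^d ⊆ ℝ^d`. -/
def openCube (d : ℕ) : Set (Fin d → ℝ) := Set.univ.pi fun _ => Set.Ioo (0 : ℝ) 1

/-- The closed unit cube `D̄ = [0,1]^d ⊆ ℝ^d`. -/
def closedCube (d : ℕ) : Set (Fin d → ℝ) := Set.Icc 0 1

/-- The boundary `∂D = D̄ \ D` of the unit cube. -/
def cubeBoundary (d : ℕ) : Set (Fin d → ℝ) := closedCube d \ openCube d

/-- Lebesgue measure on `D = (0,1)^d` (the reference measure for `L²(D)`). -/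
def cubeMeasure (d : ℕ) : Measure (Fin d → ℝ) := volume.restrict (openCube d)

/-- The Euclidean norm on `ℝ^d`. -/
def euclidNorm {d : ℕ} (v : Fin d → ℝ) : ℝ := Real.sqrt (∑ i, v i ^ 2)

open Filter Topology

/-!
Subtracting the equations for `v = uₙ` and `u` gives `e = w + Tφ` with `w = v - u`,
`φ = F(v) - F(u)` and `e` the difference of the data. Pairing with `φ` in `L²`, cocoercivity of `T`
and the one-sided bound on `F` give `a ‖e - w‖² ≤ ⟨e - w, φ⟩ ≤ ‖e‖ ‖φ‖ + L ‖w‖²`. As `L < a` and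
`‖φ‖` grows at most linearly in `‖w‖`, this forces `w → 0` in `L²` when `e → 0`. Superposition by
`F` is continuous on `L²`, so `φ → 0` in `L²`, and since the sections `K(x, ·)` are uniformly
bounded in `L²`, `Tφ → 0` uniformly. Hence `w = e - Tφ → 0` uniformly.
-/

open scoped ENNReal NNReal InnerProductSpace

section CocoerciveEstimate

variable {H : Type*} [NormedAddCommGroup H] [InnerProductSpace ℝ H]

lemma sub_mul_norm_sq_le_of_cocoercive {a L : ℝ} {e w φ : H}
    (hcoc : a * ‖e - w‖ ^ 2 ≤ ⟪e - w, φ⟫_ℝ) (hmono : -(L * ‖w‖ ^ 2) ≤ ⟪w, φ⟫_ℝ) :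
    (a - L) * ‖w‖ ^ 2 ≤ ‖e‖ * (‖φ‖ + 2 * |a| * ‖w‖ + |a| * ‖e‖) := by
  have hcross : a * ⟪e, w⟫_ℝ ≤ |a| * (‖e‖ * ‖w‖) :=
    (le_abs_self _).trans <| (abs_mul _ _).trans_le <| by
      gcongr; exact abs_real_inner_le_norm e w
  have hsq : -(a * ‖e‖ ^ 2) ≤ |a| * ‖e‖ ^ 2 := by
    rw [← neg_mul]; gcongr; exact neg_le_abs a
  rw [norm_sub_sq_real, inner_sub_left] at hcoc
  linarith [real_inner_le_norm e φ]

lemma tendsto_zero_of_mul_sq_le {ι : Type*} {l : Filter ι} {x ε : ι → ℝ} {c A B D : ℝ}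
    (hc : 0 < c) (h : ∀ i, c * x i ^ 2 ≤ ε i * (A + B * x i + D * ε i))
    (hε : Tendsto ε l (𝓝 0)) : Tendsto x l (𝓝 0) := by
  let r : ℝ → ℝ := fun t => 2 / c * (t * A + t ^ 2 * (D + B ^ 2 / (2 * c)))
  have hr : Tendsto (fun i => r (ε i)) l (𝓝 0) := by
    have hcont : Continuous r := by fun_prop
    simpa [r, Function.comp_def] using (hcont.tendsto 0).comp hε
  have hxr (i) : x i ^ 2 ≤ r (ε i) := by
    -- Young's inequality absorbs the mixed term `ε B x` into `c x² / 2`.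
    have hyoung : ε i * B * x i ≤ c / 2 * x i ^ 2 + ε i ^ 2 * (B ^ 2 / (2 * c)) := by
      have : 0 ≤ (c * x i - ε i * B) ^ 2 / (2 * c) := by positivity
      have hexp : (c * x i - ε i * B) ^ 2 / (2 * c)
          = c / 2 * x i ^ 2 + ε i ^ 2 * (B ^ 2 / (2 * c)) - ε i * B * x i := by
        field_simp; ring
      linarith
    have hhalf : c / 2 * x i ^ 2 ≤ ε i * A + ε i ^ 2 * (D + B ^ 2 / (2 * c)) := by
      linarith [h i]
    calc x i ^ 2 = 2 / c * (c / 2 * x i ^ 2) := by field_simp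
      _ ≤ 2 / c * (ε i * A + ε i ^ 2 * (D + B ^ 2 / (2 * c))) := by gcongr
  have hsq := squeeze_zero (fun i => sq_nonneg (x i)) hxr hr
  rw [tendsto_zero_iff_abs_tendsto_zero]
  simpa [Function.comp_def, Real.sqrt_sq_eq_abs] using hsq.sqrt

end CocoerciveEstimate

section LpNorm

variable {X ι E E' : Type*} [MeasurableSpace X] {μ : Measure X} [NormedAddCommGroup E]
  [NormedAddCommGroup E'] {p : ℝ≥0∞}

lemma norm_toLp_eq_lpNorm {f : X → E} (hf : MemLp f p μ) : ‖hf.toLp f‖ = lpNorm f p μ := by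
  rw [Lp.norm_toLp, toReal_eLpNorm hf.1]

lemma inner_toLp_eq_integral_mul {f g : X → ℝ} (hf : MemLp f 2 μ) (hg : MemLp g 2 μ) :
    ⟪hf.toLp f, hg.toLp g⟫_ℝ = ∫ x, f x * g x ∂μ := by
  rw [L2.inner_def]
  refine integral_congr_ae ?_
  filter_upwards [hf.coeFn_toLp, hg.coeFn_toLp] with x hfx hgx
  simp [hfx, hgx, mul_comm]

lemma lpNorm_two_sq_eq_integral {f : X → ℝ} (hf : MemLp f 2 μ) :
    lpNorm f 2 μ ^ 2 = ∫ x, f x ^ 2 ∂μ := by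
  rw [← norm_toLp_eq_lpNorm hf, ← real_inner_self_eq_norm_sq, inner_toLp_eq_integral_mul]
  simp only [sq]

lemma abs_integral_mul_le_lpNorm_mul_lpNorm {f g : X → ℝ} (hf : MemLp f 2 μ)
    (hg : MemLp g 2 μ) : |∫ x, f x * g x ∂μ| ≤ lpNorm f 2 μ * lpNorm g 2 μ := by
  rw [← inner_toLp_eq_integral_mul hf hg, ← norm_toLp_eq_lpNorm hf, ← norm_toLp_eq_lpNorm hg]
  exact abs_real_inner_le_norm _ _

lemma tendsto_lpNorm_zero_iff {l : Filter ι} {f : ι → X → E} (hf : ∀ i, MemLp (f i) p μ) :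
    Tendsto (fun i => lpNorm (f i) p μ) l (𝓝 0) ↔
      Tendsto (fun i => eLpNorm (f i) p μ) l (𝓝 0) := by
  simp only [← toReal_eLpNorm (hf _).1]
  exact ENNReal.tendsto_toReal_iff (fun i => (hf i).eLpNorm_ne_top) ENNReal.zero_ne_top

lemma tendsto_eLpNorm_sub_of_tendstoUniformlyOn [IsFiniteMeasure μ] {l : Filter ι}
    {S : Set X} (hS : ∀ᵐ x ∂μ, x ∈ S) {f : ι → X → E} {g : X → E}
    (h : TendstoUniformlyOn f g l S) : Tendsto (fun i => eLpNorm (f i - g) p μ) l (𝓝 0) := by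
  have hbound : Tendsto (fun C : ℝ => μ Set.univ ^ p.toReal⁻¹ * ENNReal.ofReal C)
      (𝓝[>] 0) (𝓝 0) := by
    have hne : μ Set.univ ^ p.toReal⁻¹ ≠ ∞ :=
      ENNReal.rpow_ne_top_of_nonneg (by positivity) (measure_ne_top μ _)
    simpa using ENNReal.Tendsto.const_mul
      ((ENNReal.continuous_ofReal.tendsto 0).mono_left nhdsWithin_le_nhds) (.inr hne)
  rw [ENNReal.tendsto_nhds_zero]
  intro ε hε
  obtain ⟨C, hCε, hC⟩ :=
    ((ENNReal.tendsto_nhds_zero.1 hbound ε hε).and self_mem_nhdsWithin).exists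
  filter_upwards [Metric.tendstoUniformlyOn_iff.1 h C hC] with i hi
  refine (eLpNorm_le_of_ae_bound ?_).trans hCε
  filter_upwards [hS] with x hx
  rw [Pi.sub_apply, ← dist_eq_norm, dist_comm]
  exact (hi x hx).le

lemma unifIntegrable_of_norm_le_mul {C : ℝ} {f : ι → X → E} {g : ι → X → E'}
    (hf : UnifIntegrable f p μ) (h : ∀ i x, ‖g i x‖ ≤ C * ‖f i x‖) : UnifIntegrable g p μ := by
  intro ε hε
  obtain ⟨δ, hδ, hfδ⟩ := hf (ε := ε / (|C| + 1)) (by positivity)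
  refine ⟨δ, hδ, fun i s hs hμs => ?_⟩
  have hind (x) : ‖s.indicator (g i) x‖ ≤ (|C| + 1) * ‖s.indicator (f i) x‖ := by
    by_cases hx : x ∈ s
    · simp only [Set.indicator_of_mem hx]
      refine (h i x).trans ?_
      gcongr
      linarith [le_abs_self C]
    · simp [hx]
  calc eLpNorm (s.indicator (g i)) p μ
      ≤ ENNReal.ofReal (|C| + 1) * eLpNorm (s.indicator (f i)) p μ :=
        eLpNorm_le_mul_eLpNorm_of_ae_le_mul (.of_forall hind) p
    _ ≤ ENNReal.ofReal (|C| + 1) * ENNReal.ofReal (ε / (|C| + 1)) := by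
        gcongr; exact hfδ i s hs hμs
    _ = ENNReal.ofReal ε := by
        rw [← ENNReal.ofReal_mul (by positivity), mul_div_cancel₀ ε (by positivity)]

end LpNorm

section Nemytskii

variable {X ι E E' : Type*} [MeasurableSpace X] {μ : Measure X} [IsFiniteMeasure μ]
  [NormedAddCommGroup E] [NormedAddCommGroup E'] {p : ℝ≥0∞} {F : E → E'} {C : ℝ}

lemma memLp_comp_of_linear_growth (hF : Continuous F) (hgrowth : ∀ t, ‖F t‖ ≤ C * (1 + ‖t‖))
    {f : X → E} (hf : MemLp f p μ) : MemLp (F ∘ f) p μ :=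
  have hbound : MemLp (fun x => C * (1 + ‖f x‖)) p μ :=
    ((memLp_const (1 : ℝ)).add hf.norm).const_mul C
  hbound.mono' (hF.comp_aestronglyMeasurable hf.1) (.of_forall fun x => hgrowth (f x))

lemma lpNorm_comp_le_of_linear_growth (hp : 1 ≤ p) (hgrowth : ∀ t, ‖F t‖ ≤ C * (1 + ‖t‖))
    {f : X → E} (hf : MemLp f p μ) :
    lpNorm (F ∘ f) p μ ≤ C * (lpNorm (fun _ => (1 : ℝ)) p μ + lpNorm f p μ) := by
  have hC : 0 ≤ C := by simpa using (norm_nonneg (F 0)).trans (hgrowth 0)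
  have hone : MemLp (fun _ : X => (1 : ℝ)) p μ := memLp_const 1
  calc lpNorm (F ∘ f) p μ
      ≤ lpNorm (C • ((fun _ => (1 : ℝ)) + fun x => ‖f x‖)) p μ :=
        lpNorm_mono_real ((hone.add hf.norm).const_mul C) fun x => hgrowth (f x)
    _ = C * lpNorm ((fun _ => (1 : ℝ)) + fun x => ‖f x‖) p μ := by
        rw [lpNorm_const_smul, coe_nnnorm, Real.norm_of_nonneg hC]
    _ ≤ C * (lpNorm (fun _ => (1 : ℝ)) p μ + lpNorm f p μ) := by
        gcongr
        exact (lpNorm_add_le hone hp).trans_eq (by rw [lpNorm_norm hf.1])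

lemma lpNorm_comp_sub_comp_le_of_linear_growth (hp : 1 ≤ p) (hF : Continuous F)
    (hgrowth : ∀ t, ‖F t‖ ≤ C * (1 + ‖t‖)) {f g : X → E} (hf : MemLp f p μ)
    (hg : MemLp g p μ) :
    lpNorm (F ∘ f - F ∘ g) p μ ≤
      2 * C * (lpNorm (fun _ => (1 : ℝ)) p μ + lpNorm g p μ) + C * lpNorm (f - g) p μ := by
  have hC : 0 ≤ C := by simpa using (norm_nonneg (F 0)).trans (hgrowth 0)
  have hfg : lpNorm f p μ ≤ lpNorm g p μ + lpNorm (f - g) p μ := by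
    simpa using lpNorm_add_le (g := f - g) hg hp
  calc lpNorm (F ∘ f - F ∘ g) p μ
      ≤ lpNorm (F ∘ f) p μ + lpNorm (F ∘ g) p μ :=
        lpNorm_sub_le (memLp_comp_of_linear_growth hF hgrowth hf) hp
    _ ≤ C * (lpNorm (fun _ => (1 : ℝ)) p μ + lpNorm f p μ)
          + C * (lpNorm (fun _ => (1 : ℝ)) p μ + lpNorm g p μ) :=
        add_le_add (lpNorm_comp_le_of_linear_growth hp hgrowth hf)
          (lpNorm_comp_le_of_linear_growth hp hgrowth hg)
    _ ≤ _ := by linarith [mul_le_mul_of_nonneg_left hfg hC]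

lemma unifIntegrable_comp_of_linear_growth (hp : 1 ≤ p) (hp' : p ≠ ∞)
    (hgrowth : ∀ t, ‖F t‖ ≤ C * (1 + ‖t‖)) {f : ι → X → E}
    (hfm : ∀ i, AEStronglyMeasurable (f i) μ) (hf : UnifIntegrable f p μ) :
    UnifIntegrable (fun i => F ∘ f i) p μ := by
  have hone : UnifIntegrable (fun (_ : ι) (_ : X) => (1 : ℝ)) p μ :=
    unifIntegrable_const hp hp' (memLp_const 1)
  have hnorm : UnifIntegrable (fun i x => ‖f i x‖) p μ :=
    unifIntegrable_of_norm_le_mul (C := 1) hf fun i x => by simp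
  refine unifIntegrable_of_norm_le_mul (C := C)
    (hone.add hnorm hp (fun _ => aestronglyMeasurable_const) fun i => (hfm i).norm) fun i x => ?_
  have hnonneg : 0 ≤ 1 + ‖f i x‖ := by positivity
  simpa [abs_of_nonneg hnonneg] using hgrowth (f i x)

/-- Krasnoselskii's theorem on superposition operators. Every sequence has an a.e. convergent
subsequence, to which Vitali's theorem applies because linear growth passes uniform integrability
from `f` to `F ∘ f`. -/
theorem tendsto_eLpNorm_comp_sub_comp_of_linear_growth (hp : 1 ≤ p) (hp' : p ≠ ∞)
    (hF : Continuous F) (hgrowth : ∀ t, ‖F t‖ ≤ C * (1 + ‖t‖))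
    {l : Filter ι} [l.IsCountablyGenerated] {f : ι → X → E} {g : X → E}
    (hf : ∀ i, MemLp (f i) p μ) (hg : MemLp g p μ)
    (h : Tendsto (fun i => eLpNorm (f i - g) p μ) l (𝓝 0)) :
    Tendsto (fun i => eLpNorm (F ∘ f i - F ∘ g) p μ) l (𝓝 0) := by
  refine tendsto_of_subseq_tendsto fun ns hns => ?_
  have hmeas : TendstoInMeasure μ (fun n => f (ns n)) atTop g :=
    tendstoInMeasure_of_tendsto_eLpNorm (zero_lt_one.trans_le hp).ne' (fun n => (hf (ns n)).1) hg.1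
      (h.comp hns)
  obtain ⟨ms, hms, hae⟩ := hmeas.exists_seq_tendsto_ae
  have hunif : UnifIntegrable (fun n => f (ns (ms n))) p μ :=
    unifIntegrable_of_tendsto_Lp hp hp' (fun n => hf _) hg
      (h.comp (hns.comp hms.tendsto_atTop))
  refine ⟨ms, tendsto_Lp_finite_of_tendsto_ae hp hp'
    (fun n => hF.comp_aestronglyMeasurable (hf (ns (ms n))).1)
    (memLp_comp_of_linear_growth hF hgrowth hg)
    (unifIntegrable_comp_of_linear_growth hp hp' hgrowth (fun n => (hf _).1) hunif) ?_⟩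
  filter_upwards [hae] with x hx using (hF.tendsto _).comp hx

end Nemytskii

section IntegralOperator

variable {X ι : Type*} [MeasurableSpace X] {μ : Measure X} {S : Set X} {K : X → X → ℝ} {Λ : ℝ≥0}

/-- The integral operator `φ ↦ ∫ K(·, y) φ(y) dμ(y)` with kernel `K`, acting on functions rather
than on classes modulo null sets so that its values can be compared pointwise. -/
def integralOperator (μ : Measure X) (K : X → X → ℝ) (φ : X → ℝ) (x : X) : ℝ :=
  ∫ y, K x y * φ y ∂μ

/-- A Carleman kernel whose sections `K(x, ·)` are bounded in `L²(μ)` by `Λ`, uniformly in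
`x ∈ S`. The set `S` is where the integral equation is imposed; it may be larger than the
domain carrying `μ`, as with `D̄` and `D`. -/
structure IsCarlemanKernel (μ : Measure X) (S : Set X) (K : X → X → ℝ) (Λ : ℝ≥0) : Prop where
  aestronglyMeasurable : AEStronglyMeasurable (Function.uncurry K) (μ.prod μ)
  memLp : ∀ x ∈ S, MemLp (K x) 2 μ
  eLpNorm_le : ∀ x ∈ S, eLpNorm (K x) 2 μ ≤ Λ

/-- Cocoercivity `⟨Tφ, φ⟩ ≥ a ‖Tφ‖²` on `L²(μ)` of the integral operator `T` with kernel `K`. -/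
def IsCocoerciveKernel (μ : Measure X) (K : X → X → ℝ) (a : ℝ) : Prop :=
  ∀ φ : X → ℝ, MemLp φ 2 μ →
    a * ∫ x, integralOperator μ K φ x ^ 2 ∂μ ≤ ∫ x, integralOperator μ K φ x * φ x ∂μ

lemma integralOperator_sub {x : X} (hK : MemLp (K x) 2 μ) {φ ψ : X → ℝ} (hφ : MemLp φ 2 μ)
    (hψ : MemLp ψ 2 μ) :
    integralOperator μ K (φ - ψ) x = integralOperator μ K φ x - integralOperator μ K ψ x := by
  simp only [integralOperator, Pi.sub_apply, mul_sub]
  exact integral_sub (hK.integrable_mul hφ) (hK.integrable_mul hψ)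

lemma IsCarlemanKernel.abs_integralOperator_le (hK : IsCarlemanKernel μ S K Λ) {x : X}
    (hx : x ∈ S) {φ : X → ℝ} (hφ : MemLp φ 2 μ) :
    |integralOperator μ K φ x| ≤ Λ * lpNorm φ 2 μ := by
  have hKx : lpNorm (K x) 2 μ ≤ Λ := by
    rw [← toReal_eLpNorm (hK.memLp x hx).1]
    exact ENNReal.toReal_le_coe_of_le_coe (hK.eLpNorm_le x hx)
  calc |integralOperator μ K φ x| ≤ lpNorm (K x) 2 μ * lpNorm φ 2 μ :=
        abs_integral_mul_le_lpNorm_mul_lpNorm (hK.memLp x hx) hφ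
    _ ≤ Λ * lpNorm φ 2 μ := by gcongr; exact lpNorm_nonneg

lemma IsCarlemanKernel.memLp_integralOperator [IsFiniteMeasure μ] {p : ℝ≥0∞}
    (hK : IsCarlemanKernel μ S K Λ) (hS : ∀ᵐ x ∂μ, x ∈ S) {φ : X → ℝ} (hφ : MemLp φ 2 μ) :
    MemLp (integralOperator μ K φ) p μ :=
  MemLp.of_bound (hK.aestronglyMeasurable.mul hφ.1.comp_snd).integral_prod_right'
    (Λ * lpNorm φ 2 μ) (hS.mono fun _ hx => hK.abs_integralOperator_le hx hφ)

lemma IsCarlemanKernel.tendstoUniformlyOn_integralOperator (hK : IsCarlemanKernel μ S K Λ)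
    {l : Filter ι} {φ : ι → X → ℝ} {ψ : X → ℝ} (hφ : ∀ i, MemLp (φ i) 2 μ) (hψ : MemLp ψ 2 μ)
    (h : Tendsto (fun i => eLpNorm (φ i - ψ) 2 μ) l (𝓝 0)) :
    TendstoUniformlyOn (fun i => integralOperator μ K (φ i)) (integralOperator μ K ψ) l S := by
  have hbound : Tendsto (fun i => Λ * lpNorm (φ i - ψ) 2 μ) l (𝓝 0) := by
    simpa using ((tendsto_lpNorm_zero_iff fun i => (hφ i).sub hψ).2 h).const_mul (Λ : ℝ)
  rw [Metric.tendstoUniformlyOn_iff]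
  intro ε hε
  filter_upwards [hbound.eventually_lt_const hε] with i hi x hx
  rw [dist_comm, Real.dist_eq, ← integralOperator_sub (hK.memLp x hx) (hφ i) hψ]
  exact (hK.abs_integralOperator_le hx ((hφ i).sub hψ)).trans_lt hi

end IntegralOperator

section Hammerstein

variable {X ι : Type*} [MeasurableSpace X] {μ : Measure X} {S : Set X}
  {K : X → X → ℝ} {Λ : ℝ≥0} {a L C : ℝ} {F : ℝ → ℝ}

/-- The Hammerstein operator `u ↦ u + ∫ K(·, y) F(u(y)) dμ(y)`; the integral equation of the
theorem prescribes its value. -/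
def hammerstein (μ : Measure X) (K : X → X → ℝ) (F : ℝ → ℝ) (u : X → ℝ) : X → ℝ :=
  u + integralOperator μ K (F ∘ u)

lemma neg_mul_lpNorm_sq_le_integral_mul_comp_sub
    (hmono : ∀ s t : ℝ, -(L * (s - t) ^ 2) ≤ (s - t) * (F s - F t)) {u v : X → ℝ}
    (hu : MemLp u 2 μ) (hv : MemLp v 2 μ) (hFu : MemLp (F ∘ u) 2 μ) (hFv : MemLp (F ∘ v) 2 μ) :
    -(L * lpNorm (v - u) 2 μ ^ 2) ≤ ∫ x, (v - u) x * (F ∘ v - F ∘ u) x ∂μ := by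
  rw [lpNorm_two_sq_eq_integral (hv.sub hu), ← integral_const_mul, ← integral_neg]
  exact integral_mono ((hv.sub hu).integrable_sq.const_mul L).neg
    ((hv.sub hu).integrable_mul (hFv.sub hFu)) fun x => hmono (v x) (u x)

lemma IsCarlemanKernel.hammerstein_sub_sub_sub_ae_eq (hK : IsCarlemanKernel μ S K Λ)
    (hS : ∀ᵐ x ∂μ, x ∈ S) {u v : X → ℝ} (hFu : MemLp (F ∘ u) 2 μ) (hFv : MemLp (F ∘ v) 2 μ) :
    (hammerstein μ K F v - hammerstein μ K F u) - (v - u) =ᵐ[μ]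
      integralOperator μ K (F ∘ v - F ∘ u) := by
  filter_upwards [hS] with x hx
  rw [integralOperator_sub (hK.memLp x hx) hFv hFu]
  simp only [hammerstein, Pi.sub_apply, Pi.add_apply]
  ring

variable [IsFiniteMeasure μ]

lemma IsCarlemanKernel.memLp_hammerstein (hK : IsCarlemanKernel μ S K Λ)
    (hS : ∀ᵐ x ∂μ, x ∈ S) {u : X → ℝ} (hu : MemLp u 2 μ) (hFu : MemLp (F ∘ u) 2 μ) :
    MemLp (hammerstein μ K F u) 2 μ :=
  hu.add (hK.memLp_integralOperator hS hFu)

lemma IsCarlemanKernel.sub_mul_lpNorm_sub_sq_le (hK : IsCarlemanKernel μ S K Λ)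
    (hS : ∀ᵐ x ∂μ, x ∈ S) (hcoc : IsCocoerciveKernel μ K a)
    (hmono : ∀ s t : ℝ, -(L * (s - t) ^ 2) ≤ (s - t) * (F s - F t)) {u v : X → ℝ}
    (hu : MemLp u 2 μ) (hv : MemLp v 2 μ) (hFu : MemLp (F ∘ u) 2 μ) (hFv : MemLp (F ∘ v) 2 μ) :
    (a - L) * lpNorm (v - u) 2 μ ^ 2 ≤
      lpNorm (hammerstein μ K F v - hammerstein μ K F u) 2 μ *
        (lpNorm (F ∘ v - F ∘ u) 2 μ + 2 * |a| * lpNorm (v - u) 2 μ +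
          |a| * lpNorm (hammerstein μ K F v - hammerstein μ K F u) 2 μ) := by
  have he := (hK.memLp_hammerstein hS hv hFv).sub (hK.memLp_hammerstein hS hu hFu)
  have hw := hv.sub hu
  have hφ := hFv.sub hFu
  have hT : MemLp (integralOperator μ K (F ∘ v - F ∘ u)) 2 μ := hK.memLp_integralOperator hS hφ
  have hsplit : he.toLp _ - hw.toLp _ = hT.toLp _ := by
    rw [← MemLp.toLp_sub, MemLp.toLp_eq_toLp_iff]
    exact hK.hammerstein_sub_sub_sub_ae_eq hS hFu hFv
  have hcoc' : a * ‖he.toLp _ - hw.toLp _‖ ^ 2 ≤ ⟪he.toLp _ - hw.toLp _, hφ.toLp _⟫_ℝ := by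
    rw [hsplit, norm_toLp_eq_lpNorm, lpNorm_two_sq_eq_integral hT, inner_toLp_eq_integral_mul]
    exact hcoc _ hφ
  have hmono' : -(L * ‖hw.toLp _‖ ^ 2) ≤ ⟪hw.toLp _, hφ.toLp _⟫_ℝ := by
    rw [norm_toLp_eq_lpNorm, inner_toLp_eq_integral_mul]
    exact neg_mul_lpNorm_sq_le_integral_mul_comp_sub hmono hu hv hFu hFv
  simpa only [norm_toLp_eq_lpNorm] using sub_mul_norm_sq_le_of_cocoercive hcoc' hmono'

theorem IsCarlemanKernel.tendsto_eLpNorm_sub_of_hammerstein (hK : IsCarlemanKernel μ S K Λ)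
    (hS : ∀ᵐ x ∂μ, x ∈ S) (hcoc : IsCocoerciveKernel μ K a) (hF : Continuous F)
    (hgrowth : ∀ t, ‖F t‖ ≤ C * (1 + ‖t‖)) (hLa : L < a)
    (hmono : ∀ s t : ℝ, -(L * (s - t) ^ 2) ≤ (s - t) * (F s - F t))
    {l : Filter ι} {u : X → ℝ} {v : ι → X → ℝ} (hu : MemLp u 2 μ) (hv : ∀ i, MemLp (v i) 2 μ)
    (h : Tendsto (fun i => eLpNorm (hammerstein μ K F (v i) - hammerstein μ K F u) 2 μ) l (𝓝 0)) :
    Tendsto (fun i => eLpNorm (v i - u) 2 μ) l (𝓝 0) := by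
  have hFu := memLp_comp_of_linear_growth hF hgrowth hu
  have hFv i := memLp_comp_of_linear_growth hF hgrowth (hv i)
  have he i : MemLp (hammerstein μ K F (v i) - hammerstein μ K F u) 2 μ :=
    (hK.memLp_hammerstein hS (hv i) (hFv i)).sub (hK.memLp_hammerstein hS hu hFu)
  rw [← tendsto_lpNorm_zero_iff he] at h
  rw [← tendsto_lpNorm_zero_iff fun i => (hv i).sub hu]
  refine tendsto_zero_of_mul_sq_le (sub_pos.2 hLa) (fun i => ?_) h
    (A := 2 * C * (lpNorm (fun _ => (1 : ℝ)) 2 μ + lpNorm u 2 μ)) (B := C + 2 * |a|) (D := |a|)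
  refine (hK.sub_mul_lpNorm_sub_sq_le hS hcoc hmono hu (hv i) hFu (hFv i)).trans ?_
  gcongr ?_ * (?_ + _)
  · exact lpNorm_nonneg
  · linarith [lpNorm_comp_sub_comp_le_of_linear_growth one_le_two hF hgrowth (hv i) hu]

end Hammerstein

theorem stmt14_general {X ι : Type*} [MeasurableSpace X] {μ : Measure X} [IsFiniteMeasure μ]
    {S : Set X} (hS : ∀ᵐ x ∂μ, x ∈ S) {K : X → X → ℝ} {Λ : ℝ≥0} (hK : IsCarlemanKernel μ S K Λ)
    {a : ℝ} (hcoc : IsCocoerciveKernel μ K a) {F : ℝ → ℝ} (hF : Continuous F) {C : ℝ}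
    (hgrowth : ∀ t, ‖F t‖ ≤ C * (1 + ‖t‖)) {L : ℝ} (hLa : L < a)
    (hmono : ∀ s t : ℝ, -(L * (s - t) ^ 2) ≤ (s - t) * (F s - F t))
    {f u : X → ℝ} {uₙ : ι → X → ℝ} {η : X → ℝ} {ηₙ : ι → X → ℝ}
    (hu : MemLp u 2 μ) (huₙ : ∀ i, MemLp (uₙ i) 2 μ)
    (hequ : ∀ x ∈ S, hammerstein μ K F u x = f x + η x)
    (hequₙ : ∀ i, ∀ x ∈ S, hammerstein μ K F (uₙ i) x = f x + ηₙ i x)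
    {l : Filter ι} [l.IsCountablyGenerated] (hη : TendstoUniformlyOn ηₙ η l S) :
    TendstoUniformlyOn uₙ u l S := by
  have hH : TendstoUniformlyOn (fun i => hammerstein μ K F (uₙ i)) (hammerstein μ K F u) l S := by
    have hfη : TendstoUniformlyOn (fun i x => f x + ηₙ i x) (fun x => f x + η x) l S := by
      simpa only [Metric.tendstoUniformlyOn_iff, dist_add_left] using hη
    exact (hfη.congr (.of_forall fun i x hx => (hequₙ i x hx).symm)).congr_right
      fun x hx => (hequ x hx).symm
  have hu_lim : Tendsto (fun i => eLpNorm (uₙ i - u) 2 μ) l (𝓝 0) :=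
    hK.tendsto_eLpNorm_sub_of_hammerstein hS hcoc hF hgrowth hLa hmono hu huₙ
      (tendsto_eLpNorm_sub_of_tendstoUniformlyOn hS hH)
  have hFu_lim : Tendsto (fun i => eLpNorm (F ∘ uₙ i - F ∘ u) 2 μ) l (𝓝 0) :=
    tendsto_eLpNorm_comp_sub_comp_of_linear_growth one_le_two ENNReal.ofNat_ne_top hF hgrowth
      huₙ hu hu_lim
  have hT := hK.tendstoUniformlyOn_integralOperator
    (fun i => memLp_comp_of_linear_growth hF hgrowth (huₙ i))
    (memLp_comp_of_linear_growth hF hgrowth hu) hFu_lim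
  simpa [hammerstein, Pi.sub_def] using hH.sub hT

section Cube

variable {d : ℕ}

lemma openCube_subset_closedCube : openCube d ⊆ closedCube d := fun _ hx =>
  ⟨fun i => (hx i trivial).1.le, fun i => (hx i trivial).2.le⟩

instance isFiniteMeasure_cubeMeasure : IsFiniteMeasure (cubeMeasure d) :=
  isFiniteMeasure_restrict.2
    ((measure_mono openCube_subset_closedCube).trans_lt isCompact_Icc.measure_lt_top).ne

lemma ae_mem_closedCube : ∀ᵐ x ∂cubeMeasure d, x ∈ closedCube d :=
  (ae_restrict_mem (MeasurableSet.univ_pi fun _ => measurableSet_Ioo)).mono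
    fun _ hx => openCube_subset_closedCube hx

lemma memLp_cubeMeasure_of_continuousOn {p : ℝ≥0∞} {f : (Fin d → ℝ) → ℝ}
    (hf : ContinuousOn f (closedCube d)) : MemLp f p (cubeMeasure d) := by
  have hmeas : AEStronglyMeasurable f (cubeMeasure d) :=
    (hf.aestronglyMeasurable measurableSet_Icc).mono_set openCube_subset_closedCube
  obtain ⟨R, hR⟩ := isCompact_Icc.exists_bound_of_continuousOn hf
  exact .of_bound hmeas R (ae_mem_closedCube.mono hR)

end Cube

/-- STATEMENT 13: Under the Poincaré-type inequality for the kernel `K` (with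
`Λ = sup_x ‖K(x,·)‖_{L²} < ∞`), the monotonicity condition on the continuous bounded
function `F` with `0 ≤ L < a`, if `u, uₙ ∈ 𝒞₀(D̄)` solve the integral equations with
data `η, ηₙ ∈ 𝒞₀(D̄)` and `ηₙ → η` uniformly on `D̄`, then `uₙ → u` uniformly on
`D̄`; i.e. the solution map `Ψ : η ↦ u` is continuous for the uniform norm. -/
theorem stmt14 (d : ℕ) (hd : 0 < d)
    (K : (Fin d → ℝ) → (Fin d → ℝ) → ℝ) (hKmeas : Measurable (Function.uncurry K))
    (hKL2 : ∀ x ∈ closedCube d, MemLp (K x) 2 (cubeMeasure d))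
    (Λ : ℝ) (hΛ : ∀ x ∈ closedCube d, eLpNorm (K x) 2 (cubeMeasure d) ≤ ENNReal.ofReal Λ)
    (a : ℝ) (ha : 0 < a)
    (hPoincare : ∀ φ : (Fin d → ℝ) → ℝ, MemLp φ 2 (cubeMeasure d) →
      a * ∫ x, (∫ y, K x y * φ y ∂(cubeMeasure d)) ^ 2 ∂(cubeMeasure d)
        ≤ ∫ x, (∫ y, K x y * φ y ∂(cubeMeasure d)) * φ x ∂(cubeMeasure d))
    (F : ℝ → ℝ) (hFcont : Continuous F) (MF : ℝ) (hFbd : ∀ t, |F t| ≤ MF)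
    (L : ℝ) (hL0 : 0 ≤ L) (hLa : L < a)
    (hFmono : ∀ s t : ℝ, -(L * (s - t) ^ 2) ≤ (s - t) * (F s - F t))
    (g : (Fin d → ℝ) → ℝ) (hg : MemLp g 2 (cubeMeasure d))
    (u : (Fin d → ℝ) → ℝ) (uₙ : ℕ → (Fin d → ℝ) → ℝ)
    (η : (Fin d → ℝ) → ℝ) (ηₙ : ℕ → (Fin d → ℝ) → ℝ)
    (hu : ContinuousOn u (closedCube d)) (hu0 : ∀ x ∈ cubeBoundary d, u x = 0)
    (huₙ : ∀ n, ContinuousOn (uₙ n) (closedCube d))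
    (huₙ0 : ∀ n, ∀ x ∈ cubeBoundary d, uₙ n x = 0)
    (hη : ContinuousOn η (closedCube d)) (hη0 : ∀ x ∈ cubeBoundary d, η x = 0)
    (hηₙ : ∀ n, ContinuousOn (ηₙ n) (closedCube d))
    (hηₙ0 : ∀ n, ∀ x ∈ cubeBoundary d, ηₙ n x = 0)
    (hequ : ∀ x ∈ closedCube d,
      u x + ∫ y, K x y * F (u y) ∂(cubeMeasure d)
        = (∫ y, K x y * g y ∂(cubeMeasure d)) + η x)
    (hequₙ : ∀ n, ∀ x ∈ closedCube d,
      uₙ n x + ∫ y, K x y * F (uₙ n y) ∂(cubeMeasure d)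
        = (∫ y, K x y * g y ∂(cubeMeasure d)) + ηₙ n x)
    (hηconv : TendstoUniformlyOn (fun n => ηₙ n) η atTop (closedCube d)) :
    TendstoUniformlyOn (fun n => uₙ n) u atTop (closedCube d) := by
  have hgrowth (t : ℝ) : ‖F t‖ ≤ MF * (1 + ‖t‖) :=
    (hFbd t).trans (le_mul_of_one_le_right ((abs_nonneg _).trans (hFbd 0)) (by simp))
  exact stmt14_general ae_mem_closedCube ⟨hKmeas.aestronglyMeasurable, hKL2, hΛ⟩ hPoincare hFcont
    hgrowth hLa hFmono (memLp_cubeMeasure_of_continuousOn hu)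
    (fun n => memLp_cubeMeasure_of_continuousOn (huₙ n)) hequ hequₙ hηconv
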